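/- Suppose y* ∈ C¹_rd(𝕋;ℝⁿ) is a weak local minimizer of 𝓛 with both endpoints fixed: there is δ > 0 such that 𝓛[y*] ≤ 𝓛[y] for every y ∈ C¹_rd(𝕋;ℝⁿ) with y(a) = y*(a), y(b) = y*(b) and ‖y − y*‖_{1,∞} < δ. Then the Euler–Lagrange equation in delta-differentiated form holds: the function g : 𝕋^k → ℝⁿ defined by g(t) = L_v(t, y*(t), y*^Δ(t)) − μ(t)·L_y(t, y*(t), y*^Δ(t)) is delta differentiable at every t ∈ 𝕋^{k²} with g^Δ(t) = L_y(t, y*(t), y*^Δ(t)). -/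

import Mathlib

open Set Filter

noncomputable section

-- Forward jump operator of the set `S`.
open Classical in
def tsSigma (S : Set ℝ) (t : ℝ) : ℝ :=
  if ({s | s ∈ S ∧ t < s}).Nonempty then sInf {s | s ∈ S ∧ t < s} else t

-- Backward jump operator of the set `S`.
open Classical in
def tsRho (S : Set ℝ) (t : ℝ) : ℝ :=
  if ({s | s ∈ S ∧ s < t}).Nonempty then sSup {s | s ∈ S ∧ s < t} else t

/-- Graininess function. -/
def tsMu (S : Set ℝ) (t : ℝ) : ℝ := tsSigma S t - t

/-- `S^k = S \ (ρ(max S), max S]`. -/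
def tsTk (S : Set ℝ) : Set ℝ := S \ Set.Ioc (tsRho S (sSup S)) (sSup S)

/-- Delta differentiability at `t` of `f` regarded as a function on the time scale `S`,
with delta derivative `d`. -/
def deltaDiffAt {E : Type*} [NormedAddCommGroup E] [NormedSpace ℝ E]
    (S : Set ℝ) (f : ℝ → E) (t : ℝ) (d : E) : Prop :=
  ∀ ε > 0, ∃ δ > 0, ∀ s ∈ S ∩ Set.Ioo (t - δ) (t + δ),
    ‖f (tsSigma S t) - f s - (tsSigma S t - s) • d‖ ≤ ε * |tsSigma S t - s|

/-- rd-continuity of `f` on its domain `S`: continuity (within `S`) at right-dense points and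
existence of a finite left-sided limit along `S` at left-dense points. -/
def RdContinuousOn {E : Type*} [NormedAddCommGroup E]
    (S : Set ℝ) (f : ℝ → E) : Prop :=
  ∀ t ∈ S, (tsSigma S t = t → ContinuousWithinAt f S t) ∧
    (tsRho S t = t → ∃ l : E, Filter.Tendsto f (nhdsWithin t (S ∩ Set.Iio t)) (nhds l))

/-- `y ∈ C¹_rd(T)`, with delta derivative `yd`. -/
def C1rd {E : Type*} [NormedAddCommGroup E] [NormedSpace ℝ E]
    (T : Set ℝ) (y yd : ℝ → E) : Prop :=
  (∀ t ∈ tsTk T, deltaDiffAt T y t (yd t)) ∧ RdContinuousOn (tsTk T) yd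

/-- `F` is a delta antiderivative of `f` on the time scale `S`; the delta integral
`∫_c^d f Δt` is `F d - F c` for any such `F`. -/
def IsDeltaAntideriv {E : Type*} [NormedAddCommGroup E] [NormedSpace ℝ E]
    (S : Set ℝ) (f F : ℝ → E) : Prop :=
  ∀ t ∈ tsTk S, deltaDiffAt S F t (f t)

/-- Sup norm of `f` over the set `S`. -/
def tsSupNorm {E : Type*} [NormedAddCommGroup E] (S : Set ℝ) (f : ℝ → E) : ℝ :=
  sSup ((fun t => ‖f t‖) '' S)

abbrev En (n : ℕ) : Type := EuclideanSpace ℝ (Fin n)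

/-!
Collapsing every gap `[t, σ(t))` of the time scale onto `t` pushes Lebesgue measure forward to a
finite measure on `𝕋^k` whose integrals are delta integrals and whose atoms are the right-scattered
points, with mass `μ(t)`. With respect to it the first variation of `𝓛` in a direction with
delta derivative `φ` is `∫ ⟪L_y, ∫_{[a, t)} φ⟫ + ⟪L_v, φ⟫`, and Fubini moves the inner integral off
`φ`: `L_v(t) + ∫_{(t, b)} L_y` is orthogonal to every continuous `φ` of integral zero, hence almost
everywhere constant. The open interval `(t, b)` leaves out the atom at `t`, and so
`∫_{(t, b)} L_y = const - ∫_{[a, t)} L_y - μ(t) L_y(t)`: this is where the graininess term comes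
from. Equality holds at each `t` in `𝕋^k`, because `t` is either an atom or a right-dense point of
continuity in the support of the measure. Differentiating this identity gives the theorem.
-/

open MeasureTheory Topology Asymptotics
open scoped InnerProductSpace BoundedContinuousFunction

section JumpOperators

variable {S T : Set ℝ} {s t x : ℝ}

lemma le_tsSigma (S : Set ℝ) (t : ℝ) : t ≤ tsSigma S t := by
  unfold tsSigma
  split_ifs with h
  · exact le_csInf h fun s hs => hs.2.le
  · exact le_rfl

lemma tsSigma_le (hs : s ∈ S) (hts : t < s) : tsSigma S t ≤ s := by
  rw [tsSigma, if_pos ⟨s, hs, hts⟩]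
  exact csInf_le ⟨t, fun x hx => hx.2.le⟩ ⟨hs, hts⟩

lemma lt_tsSigma (h : tsSigma S t ≠ t) : t < tsSigma S t :=
  (le_tsSigma S t).lt_of_ne' h

lemma exists_lt_of_tsSigma_lt (hs : s ∈ S) (hts : t < s) (hx : tsSigma S t < x) :
    ∃ y ∈ S, t < y ∧ y < x := by
  have hne : {y | y ∈ S ∧ t < y}.Nonempty := ⟨s, hs, hts⟩
  rw [tsSigma, if_pos hne] at hx
  obtain ⟨y, ⟨hyS, hty⟩, hyx⟩ := exists_lt_of_csInf_lt hne hx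
  exact ⟨y, hyS, hty, hyx⟩

lemma tsSigma_mem (hS : IsClosed S) (ht : t ∈ S) : tsSigma S t ∈ S := by
  unfold tsSigma
  split_ifs with h
  · exact closure_minimal (fun x hx => hx.1) hS (csInf_mem_closure h ⟨t, fun x hx => hx.2.le⟩)
  · exact ht

lemma tsRho_le (S : Set ℝ) (t : ℝ) : tsRho S t ≤ t := by
  unfold tsRho
  split_ifs with h
  · exact csSup_le h fun s hs => hs.2.le
  · exact le_rfl

lemma le_tsRho (hs : s ∈ S) (hst : s < t) : s ≤ tsRho S t := by
  rw [tsRho, if_pos ⟨s, hs, hst⟩]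
  exact le_csSup ⟨t, fun x hx => hx.2.le⟩ ⟨hs, hst⟩

lemma exists_gt_of_lt_tsRho (hs : s ∈ S) (hst : s < t) (hx : x < tsRho S t) :
    ∃ y ∈ S, x < y ∧ y < t := by
  have hne : {y | y ∈ S ∧ y < t}.Nonempty := ⟨s, hs, hst⟩
  rw [tsRho, if_pos hne] at hx
  obtain ⟨y, ⟨hyS, hyt⟩, hxy⟩ := exists_lt_of_lt_csSup hne hx
  exact ⟨y, hyS, hxy, hyt⟩

lemma nhdsWithin_inter_Ioi_eq_bot (h : tsSigma S t ≠ t) : 𝓝[S ∩ Ioi t] t = ⊥ := by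
  rw [← empty_mem_iff_bot]
  filter_upwards [self_mem_nhdsWithin, mem_nhdsWithin_of_mem_nhds (Iio_mem_nhds (lt_tsSigma h))]
    with s hs hsσ
  exact hsσ.not_ge (tsSigma_le hs.1 hs.2)

lemma nhdsWithin_inter_Iio_eq_bot (h : tsRho S t ≠ t) : 𝓝[S ∩ Iio t] t = ⊥ := by
  rw [← empty_mem_iff_bot]
  filter_upwards [self_mem_nhdsWithin,
    mem_nhdsWithin_of_mem_nhds (Ioi_mem_nhds ((tsRho_le S t).lt_of_ne h))] with s hs hρs
  exact hρs.not_ge (le_tsRho hs.1 hs.2)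

lemma tsTk_subset (T : Set ℝ) : tsTk T ⊆ T := sdiff_subset

lemma mem_tsTk_iff (hT : BddAbove T) : t ∈ tsTk T ↔ t ∈ T ∧ t ≤ tsRho T (sSup T) :=
  and_congr_right fun ht => by simp [le_csSup hT ht]

lemma mem_tsTk_of_lt (ht : t ∈ T) (hts : t < sSup T) : t ∈ tsTk T :=
  ⟨ht, fun h => h.1.not_ge (le_tsRho ht hts)⟩

lemma mem_tsTk_of_le (hT : BddAbove T) (hs : s ∈ T) (hst : s ≤ t) (ht : t ∈ tsTk T) :
    s ∈ tsTk T :=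
  (mem_tsTk_iff hT).2 ⟨hs, hst.trans ((mem_tsTk_iff hT).1 ht).2⟩

lemma isCompact_tsTk (hT : IsCompact T) : IsCompact (tsTk T) := by
  have : tsTk T = T ∩ Iic (tsRho T (sSup T)) := Set.ext fun _ => mem_tsTk_iff hT.bddAbove
  exact this ▸ hT.inter_right isClosed_Iic

lemma tsSigma_tsTk_eq_self (hT : IsCompact T) (ht : t ∈ tsTk T) (hσ : tsSigma T t = t) :
    tsSigma (tsTk T) t = t := by
  by_contra hne
  have hmem := tsSigma_mem (isCompact_tsTk hT).isClosed ht
  obtain ⟨x, hxT, htx, hxσ⟩ :=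
    exists_lt_of_tsSigma_lt hmem.1 (lt_tsSigma hne) (hσ.trans_lt (lt_tsSigma hne))
  exact hxσ.not_ge (tsSigma_le (mem_tsTk_of_le hT.bddAbove hxT hxσ.le hmem) htx)

lemma tsSigma_tsTk_eq (hT : IsCompact T) (ht : t ∈ tsTk T) (hσ : tsSigma (tsTk T) t ≠ t) :
    tsSigma (tsTk T) t = tsSigma T t := by
  have hmem := tsSigma_mem (isCompact_tsTk hT).isClosed ht
  have hle : tsSigma T t ≤ tsSigma (tsTk T) t := tsSigma_le hmem.1 (lt_tsSigma hσ)
  have hσT : tsSigma T t ≠ t := mt (tsSigma_tsTk_eq_self hT ht) hσ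
  exact (tsSigma_le (mem_tsTk_of_le hT.bddAbove (tsSigma_mem hT.isClosed ht.1) hle hmem)
    (lt_tsSigma hσT)).antisymm hle

end JumpOperators

section DeltaDerivative

variable {E : Type*} [NormedAddCommGroup E] [NormedSpace ℝ E]
variable {S T : Set ℝ} {f g : ℝ → E} {t : ℝ} {d e : E}

lemma deltaDiffAt_iff_isLittleO :
    deltaDiffAt S f t d ↔ (fun s => f (tsSigma S t) - f s - (tsSigma S t - s) • d)
      =o[𝓝[S] t] fun s => tsSigma S t - s := by
  simp only [deltaDiffAt, isLittleO_iff, Real.norm_eq_abs, eventually_nhdsWithin_iff,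
    (nhds_basis_Ioo_pos t).eventually_iff, mem_inter_iff]
  grind

lemma deltaDiffAt_iff_hasDerivWithinAt (hσ : tsSigma S t = t) :
    deltaDiffAt S f t d ↔ HasDerivWithinAt f d S t := by
  rw [deltaDiffAt_iff_isLittleO, hasDerivWithinAt_iff_isLittleO, hσ, ← isLittleO_neg_left,
    ← isLittleO_neg_right]
  congr! 2 <;> module

lemma deltaDiffAt_of_continuousWithinAt (hσ : tsSigma S t ≠ t) (hf : ContinuousWithinAt f S t)
    (hd : f (tsSigma S t) - f t = (tsSigma S t - t) • d) : deltaDiffAt S f t d := by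
  have hlim : Tendsto (fun s => f (tsSigma S t) - f s - (tsSigma S t - s) • d) (𝓝[S] t) (𝓝 0) := by
    have hsub :
        ContinuousWithinAt (fun s => f (tsSigma S t) - f s - (tsSigma S t - s) • d) S t := by
      fun_prop
    simpa only [ContinuousWithinAt, hd, sub_self] using hsub
  have hgap : Tendsto (fun s => tsSigma S t - s) (𝓝[S] t) (𝓝 (tsSigma S t - t)) :=
    ((continuous_sub_left _).tendsto t).mono_left nhdsWithin_le_nhds
  rw [deltaDiffAt_iff_isLittleO]
  exact ((isLittleO_const_iff (sub_ne_zero.2 hσ)).2 hlim).trans_isBigO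
    ((isEquivalent_const_iff_tendsto (sub_ne_zero.2 hσ)).2 hgap).isBigO_symm

namespace deltaDiffAt

lemma continuousWithinAt (hf : deltaDiffAt S f t d) (ht : t ∈ S) : ContinuousWithinAt f S t := by
  have hgap : Tendsto (fun s => tsSigma S t - s) (𝓝[S] t) (𝓝 (tsSigma S t - t)) :=
    ((continuous_sub_left _).tendsto t).mono_left nhdsWithin_le_nhds
  have hrem : Tendsto (fun s => f (tsSigma S t) - f s - (tsSigma S t - s) • d) (𝓝[S] t) (𝓝 0) :=
    (isLittleO_one_iff ℝ).1 ((deltaDiffAt_iff_isLittleO.1 hf).trans_isBigO (hgap.isBigO_one ℝ))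
  have hlim : Tendsto f (𝓝[S] t) (𝓝 (f (tsSigma S t) - (tsSigma S t - t) • d - 0)) := by
    refine ((tendsto_const_nhds.sub (hgap.smul_const d)).sub hrem).congr fun s => ?_
    abel
  have hval := tendsto_nhds_unique (hlim.mono_left (pure_le_nhdsWithin ht)) (tendsto_pure_nhds f t)
  rwa [hval] at hlim

lemma mono (hf : deltaDiffAt T f t d) (hST : S ⊆ T) (hσ : tsSigma S t = tsSigma T t) :
    deltaDiffAt S f t d := by
  rw [deltaDiffAt_iff_isLittleO] at *
  exact hσ ▸ hf.mono (nhdsWithin_mono t hST)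

lemma add_const_smul (hf : deltaDiffAt S f t d) (hg : deltaDiffAt S g t e) (c : ℝ) :
    deltaDiffAt S (fun s => f s + c • g s) t (d + c • e) := by
  rw [deltaDiffAt_iff_isLittleO] at *
  refine (hf.add (hg.const_smul_left c)).congr_left fun s => ?_
  simp only [Pi.smul_apply]
  module

lemma const_add (hf : deltaDiffAt S f t d) (c : E) : deltaDiffAt S (fun s => c + f s) t d := by
  simpa only [deltaDiffAt, add_sub_add_left_eq_sub] using hf

lemma congr (hf : deltaDiffAt S f t d) (hS : IsClosed S) (ht : t ∈ S) (hgf : EqOn g f S) :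
    deltaDiffAt S g t d := fun ε hε => by
  obtain ⟨δ, hδ, hδf⟩ := hf ε hε
  refine ⟨δ, hδ, fun s hs => ?_⟩
  rw [hgf hs.1, hgf (tsSigma_mem hS ht)]
  exact hδf s hs

end deltaDiffAt

end DeltaDerivative

section RdContinuous

variable {E F : Type*} [NormedAddCommGroup E] [NormedAddCommGroup F]
variable {S : Set ℝ} {f : ℝ → E} {t : ℝ}

lemma rdContinuousOn_of_continuousOn (hf : ContinuousOn f S) : RdContinuousOn S f :=
  fun t ht => ⟨fun _ => hf t ht, fun _ =>
    ⟨f t, (hf t ht).mono_left (nhdsWithin_mono t inter_subset_left)⟩⟩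

namespace RdContinuousOn

lemma tendsto_right (hf : RdContinuousOn S f) (ht : t ∈ S) :
    Tendsto f (𝓝[S ∩ Ioi t] t) (𝓝 (f t)) := by
  by_cases hσ : tsSigma S t = t
  · exact ((hf t ht).1 hσ).mono_left (nhdsWithin_mono t inter_subset_left)
  · simp [nhdsWithin_inter_Ioi_eq_bot hσ]

lemma exists_tendsto_left (hf : RdContinuousOn S f) (ht : t ∈ S) :
    ∃ l, Tendsto f (𝓝[S ∩ Iio t] t) (𝓝 l) := by
  by_cases hρ : tsRho S t = t
  · exact (hf t ht).2 hρ
  · simp [nhdsWithin_inter_Iio_eq_bot hρ]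

lemma prodMk {g : ℝ → F} (hf : RdContinuousOn S f) (hg : RdContinuousOn S g) :
    RdContinuousOn S fun s => (f s, g s) := fun t ht =>
  ⟨fun hσ => ((hf t ht).1 hσ).prodMk ((hg t ht).1 hσ), fun _ => by
    obtain ⟨l, hl⟩ := hf.exists_tendsto_left ht
    obtain ⟨m, hm⟩ := hg.exists_tendsto_left ht
    exact ⟨(l, m), hl.prodMk_nhds hm⟩⟩

lemma comp_continuousOn {Φ : ℝ → E → F} (hf : RdContinuousOn S f)
    (hΦ : ContinuousOn (fun p : ℝ × E => Φ p.1 p.2) (S ×ˢ univ)) :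
    RdContinuousOn S fun s => Φ s (f s) := by
  have hcomp {A : Set ℝ} (hAS : A ⊆ S) {t : ℝ} {l : E} (ht : t ∈ S)
      (hl : Tendsto f (𝓝[A] t) (𝓝 l)) : Tendsto (fun s => Φ s (f s)) (𝓝[A] t) (𝓝 (Φ t l)) := by
    have hgraph : Tendsto (fun s => (s, f s)) (𝓝[A] t) (𝓝[S ×ˢ univ] (t, l)) := by
      refine tendsto_nhdsWithin_iff.2 ⟨(tendsto_id'.2 nhdsWithin_le_nhds).prodMk_nhds hl, ?_⟩
      filter_upwards [self_mem_nhdsWithin] with s hs using ⟨hAS hs, mem_univ _⟩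
    exact (hΦ (t, l) ⟨ht, mem_univ l⟩).tendsto.comp hgraph
  exact fun t ht => ⟨fun hσ => hcomp Subset.rfl ht ((hf t ht).1 hσ), fun hρ =>
    ((hf t ht).2 hρ).imp' (Φ t) fun _ hl => hcomp inter_subset_left ht hl⟩

lemma totallyBounded_image (hf : RdContinuousOn S f) (hS : IsCompact S) :
    TotallyBounded (f '' S) := by
  rw [Metric.totallyBounded_iff]
  intro ε hε
  refine hS.induction_on (p := fun A => ∃ C : Set E, C.Finite ∧ f '' A ⊆ ⋃ y ∈ C, Metric.ball y ε)
    ⟨∅, finite_empty, by simp⟩ ?_ ?_ ?_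
  · rintro A B hAB ⟨C, hC, hBC⟩
    exact ⟨C, hC, (image_mono hAB).trans hBC⟩
  · rintro A B ⟨C, hC, hAC⟩ ⟨D, hD, hBD⟩
    refine ⟨C ∪ D, hC.union hD, ?_⟩
    rw [image_union, biUnion_union]
    exact union_subset_union hAC hBD
  · intro t ht
    obtain ⟨l, hl⟩ := hf.exists_tendsto_left ht
    have hleft := hl.eventually (Metric.ball_mem_nhds l hε)
    have hright := (hf.tendsto_right ht).eventually (Metric.ball_mem_nhds (f t) hε)
    refine ⟨{s | f s ∈ Metric.ball l ε ∪ Metric.ball (f t) ε}, ?_, {l, f t}, toFinite _, ?_⟩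
    · rw [eventually_nhdsWithin_iff] at hleft hright
      filter_upwards [self_mem_nhdsWithin, mem_nhdsWithin_of_mem_nhds hleft,
        mem_nhdsWithin_of_mem_nhds hright] with s hs hsl hsr
      rcases lt_trichotomy s t with hst | rfl | hst
      · exact .inl (hsl ⟨hs, hst⟩)
      · exact .inr (Metric.mem_ball_self hε)
      · exact .inr (hsr ⟨hs, hst⟩)
    · rintro _ ⟨s, hs, rfl⟩
      simpa using hs

lemma exists_isCompact_mapsTo [CompleteSpace E] (hf : RdContinuousOn S f) (hS : IsCompact S) :
    ∃ K, IsCompact K ∧ MapsTo f S K :=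
  ⟨closure (f '' S), (hf.totallyBounded_image hS).closure.isCompact_of_isClosed isClosed_closure,
    fun _ hs => subset_closure (mem_image_of_mem f hs)⟩

lemma exists_norm_le (hf : RdContinuousOn S f) (hS : IsCompact S) : ∃ C, ∀ s ∈ S, ‖f s‖ ≤ C :=
  let ⟨C, hC⟩ := (hf.totallyBounded_image hS).isBounded.exists_norm_le
  ⟨C, fun _ hs => hC _ (mem_image_of_mem f hs)⟩

lemma aestronglyMeasurable (hf : RdContinuousOn S f) (hS : MeasurableSet S) (ν : Measure ℝ) :
    AEStronglyMeasurable f (ν.restrict S) := by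
  let D := {t ∈ S | tsSigma S t ≠ t}
  have hisolated : D ⊆ {t ∈ S | 𝓝[S ∩ Ioi t] t = ⊥} := fun t ht =>
    ⟨ht.1, nhdsWithin_inter_Ioi_eq_bot ht.2⟩
  have hD : D.Countable := countable_setOfPred_isolated_right_within.mono hisolated
  have hcont : ContinuousOn f (S \ D) := fun t ht =>
    ((hf t ht.1).1 (not_not.1 fun hσ => ht.2 ⟨ht.1, hσ⟩)).mono sdiff_subset
  have hcount : AEStronglyMeasurable f (ν.restrict D) := by
    have := hD.to_subtype
    rw [← biUnion_of_singleton D, biUnion_eq_iUnion, aestronglyMeasurable_iUnion_iff]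
    simp [Measure.restrict_singleton, aestronglyMeasurable_dirac.smul_measure]
  rw [← sdiff_union_of_subset (sep_subset S _ : D ⊆ S), aestronglyMeasurable_union_iff]
  exact ⟨hcont.aestronglyMeasurable (hS.diff hD.measurableSet), hcount⟩

end RdContinuousOn

end RdContinuous

/-- The largest point of the time scale `T` that is at most `x`; for `x < sInf T` there is none and
the value is the junk value `0`. -/
def tsFloor (T : Set ℝ) (x : ℝ) : ℝ := sSup (T ∩ Iic x)

/-- The measure on `T` whose integral is the delta integral over `T`: the image of Lebesgue measure
under the map collapsing each gap `[t, σ t)` of the time scale onto its left endpoint `t`. -/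
def deltaMeasure (T : Set ℝ) : Measure ℝ :=
  (volume.restrict (Ico (sInf T) (sSup T))).map (tsFloor T)

section DeltaMeasure

variable {T : Set ℝ} {s t x : ℝ}

lemma tsFloor_mem (hT : IsCompact T) (hx : x ∈ Ico (sInf T) (sSup T)) :
    tsFloor T x ∈ T ∩ Iic x := by
  have hne : T.Nonempty := nonempty_iff_ne_empty.2 (by rintro rfl; simp at hx)
  exact (hT.inter_right isClosed_Iic).sSup_mem ⟨sInf T, hT.sInf_mem hne, hx.1⟩

lemma le_tsFloor (hs : s ∈ T) (hsx : s ≤ x) : s ≤ tsFloor T x :=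
  le_csSup ⟨x, fun _ hy => hy.2⟩ ⟨hs, hsx⟩

lemma le_tsFloor_iff (hT : IsCompact T) (hx : x ∈ Ico (sInf T) (sSup T)) (hs : s ∈ T) :
    s ≤ tsFloor T x ↔ s ≤ x :=
  ⟨fun h => h.trans (tsFloor_mem hT hx).2, le_tsFloor hs⟩

lemma aemeasurable_tsFloor (hT : IsCompact T) :
    AEMeasurable (tsFloor T) (volume.restrict (Ico (sInf T) (sSup T))) :=
  aemeasurable_restrict_of_monotoneOn measurableSet_Ico fun _ hx _ _ hxy =>
    le_tsFloor (tsFloor_mem hT hx).1 ((tsFloor_mem hT hx).2.trans hxy)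

lemma deltaMeasure_apply (hT : IsCompact T) {A : Set ℝ} (hA : MeasurableSet A) :
    deltaMeasure T A = volume (tsFloor T ⁻¹' A ∩ Ico (sInf T) (sSup T)) := by
  rw [deltaMeasure, Measure.map_apply_of_aemeasurable (aemeasurable_tsFloor hT) hA,
    Measure.restrict_apply' measurableSet_Ico]

lemma deltaMeasure_Ico (hT : IsCompact T) (hs : s ∈ T) (ht : t ∈ T) :
    deltaMeasure T (Ico s t) = ENNReal.ofReal (t - s) := by
  rw [deltaMeasure_apply hT measurableSet_Ico, ← Real.volume_Ico]
  congr 1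
  ext x
  refine ⟨fun ⟨⟨hsx, hxt⟩, hx⟩ => ⟨(le_tsFloor_iff hT hx hs).1 hsx, ?_⟩, fun hx => ?_⟩
  · exact lt_of_not_ge (mt (le_tsFloor_iff hT hx ht).2 hxt.not_ge)
  · have hx' : x ∈ Ico (sInf T) (sSup T) :=
      ⟨(csInf_le hT.bddBelow hs).trans hx.1, hx.2.trans_le (le_csSup hT.bddAbove ht)⟩
    exact ⟨⟨le_tsFloor hs hx.1, lt_of_not_ge (mt (le_tsFloor_iff hT hx' ht).1 hx.2.not_ge)⟩, hx'⟩

lemma deltaMeasure_singleton (hT : IsCompact T) (ht : t ∈ T) :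
    deltaMeasure T {t} = ENNReal.ofReal (tsMu T t) := by
  rw [deltaMeasure_apply hT (measurableSet_singleton t), tsMu]
  refine le_antisymm ?_ ?_
  · rw [← Real.volume_Icc]
    refine measure_mono fun x ⟨hxt, hx⟩ => ?_
    obtain rfl : tsFloor T x = t := hxt
    refine ⟨(tsFloor_mem hT hx).2, le_of_not_gt fun hσx => ?_⟩
    have hne : T.Nonempty := ⟨_, ht⟩
    obtain ⟨y, hy, hty, hyx⟩ :=
      exists_lt_of_tsSigma_lt (hT.sSup_mem hne) ((tsFloor_mem hT hx).2.trans_lt hx.2) hσx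
    exact hty.not_ge (le_tsFloor hy hyx.le)
  · rw [← Real.volume_Ico]
    refine measure_mono fun x hx => ?_
    have hx' : x ∈ Ico (sInf T) (sSup T) := ⟨(csInf_le hT.bddBelow ht).trans hx.1,
      hx.2.trans_le (le_csSup hT.bddAbove (tsSigma_mem hT.isClosed ht))⟩
    refine ⟨le_antisymm (le_of_not_gt fun htx => ?_) (le_tsFloor ht hx.1), hx'⟩
    exact hx.2.not_ge ((tsSigma_le (tsFloor_mem hT hx').1 htx).trans (tsFloor_mem hT hx').2)

instance isFiniteMeasure_deltaMeasure : IsFiniteMeasure (deltaMeasure T) := by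
  unfold deltaMeasure
  infer_instance

lemma ae_mem_deltaMeasure (hT : IsCompact T) :
    ∀ᵐ x ∂deltaMeasure T, x ∈ T ∩ Iio (sSup T) := by
  refine (ae_map_iff (aemeasurable_tsFloor hT) (hT.measurableSet.inter measurableSet_Iio)).2 ?_
  filter_upwards [ae_restrict_mem measurableSet_Ico] with x hx
  exact ⟨(tsFloor_mem hT hx).1, (tsFloor_mem hT hx).2.trans_lt hx.2⟩

lemma ae_mem_tsTk_deltaMeasure (hT : IsCompact T) : ∀ᵐ x ∂deltaMeasure T, x ∈ tsTk T :=
  (ae_mem_deltaMeasure hT).mono fun _ hx => mem_tsTk_of_lt hx.1 hx.2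

lemma tsTk_subset_support_deltaMeasure (hT : IsCompact T) (hnt : T.Nontrivial) :
    tsTk T ⊆ (deltaMeasure T).support := by
  intro t ht
  have hmax : sSup T ∈ T := hT.sSup_mem hnt.nonempty
  have hIco {r s : ℝ} (hr : r ∈ T) (hs : s ∈ T) (hrs : r < s) : 0 < deltaMeasure T (Ico r s) := by
    simpa [deltaMeasure_Ico hT hr hs] using hrs
  refine (Measure.mem_support_iff_forall t).2 fun U hU => ?_
  obtain ⟨l, u, ⟨hlt, htu⟩, hluU⟩ := mem_nhds_iff_exists_Ioo_subset.1 hU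
  rcases (le_csSup hT.bddAbove ht.1).lt_or_eq with htmax | rfl
  · by_cases hσ : tsSigma T t = t
    · obtain ⟨s, hs, hts, hsu⟩ := exists_lt_of_tsSigma_lt hmax htmax (hσ.trans_lt htu)
      exact (hIco ht.1 hs hts).trans_le
        (measure_mono fun x hx => hluU ⟨hlt.trans_le hx.1, hx.2.trans hsu⟩)
    · have hsingle : 0 < deltaMeasure T {t} := by
        simpa [deltaMeasure_singleton hT ht.1, tsMu] using lt_tsSigma hσ
      exact hsingle.trans_le (measure_mono (singleton_subset_iff.2 (hluU ⟨hlt, htu⟩)))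
  · obtain ⟨r, hr, hrmax⟩ := hnt.exists_ne (sSup T)
    obtain ⟨s, hs, hls, hsmax⟩ := exists_gt_of_lt_tsRho hr
      ((le_csSup hT.bddAbove hr).lt_of_ne hrmax)
      (hlt.trans_le ((mem_tsTk_iff hT.bddAbove).1 ht).2)
    exact (hIco hs hmax hsmax).trans_le
      (measure_mono fun x hx => hluU ⟨hls.trans_le hx.1, hx.2.trans htu⟩)

namespace RdContinuousOn

lemma integrable_deltaMeasure {E : Type*} [NormedAddCommGroup E] {f : ℝ → E}
    (hf : RdContinuousOn (tsTk T) f) (hT : IsCompact T) :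
    Integrable f (deltaMeasure T) := by
  have hrestrict := Measure.restrict_eq_self_of_ae_mem (ae_mem_tsTk_deltaMeasure hT)
  obtain ⟨C, hC⟩ := hf.exists_norm_le (isCompact_tsTk hT)
  refine .of_bound (C := C) ?_ ((ae_mem_tsTk_deltaMeasure hT).mono hC)
  exact hrestrict ▸ hf.aestronglyMeasurable (isCompact_tsTk hT).measurableSet (deltaMeasure T)

end RdContinuousOn

end DeltaMeasure

/-- The delta integral of `f` from `sInf T` to `t`. -/
def deltaPrimitive {E : Type*} [NormedAddCommGroup E] [NormedSpace ℝ E] (T : Set ℝ) (f : ℝ → E)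
    (t : ℝ) : E :=
  ∫ x in Iio t, f x ∂deltaMeasure T

section DeltaPrimitive

variable {E : Type*} [NormedAddCommGroup E] [NormedSpace ℝ E]
variable {T : Set ℝ} {f : ℝ → E} {s t : ℝ} {d : E} {C : ℝ}

lemma deltaPrimitive_sInf (hT : IsCompact T) (f : ℝ → E) : deltaPrimitive T f (sInf T) = 0 := by
  refine setIntegral_measure_zero f (measure_eq_zero_iff_ae_notMem.2 ?_)
  filter_upwards [ae_mem_deltaMeasure hT] with x hx
  exact (csInf_le hT.bddBelow hx.1).not_gt

lemma deltaPrimitive_sSup (hT : IsCompact T) (f : ℝ → E) :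
    deltaPrimitive T f (sSup T) = ∫ x, f x ∂deltaMeasure T := by
  rw [deltaPrimitive, Measure.restrict_eq_self_of_ae_mem]
  exact (ae_mem_deltaMeasure hT).mono fun _ hx => hx.2

variable [CompleteSpace E]

lemma norm_deltaPrimitive_sub_le (hT : IsCompact T) (hf : Integrable f (deltaMeasure T))
    (hs : s ∈ T) (ht : t ∈ T) (hst : s ≤ t) (hC : ∀ x ∈ tsTk T ∩ Ico s t, ‖f x - d‖ ≤ C) :
    ‖deltaPrimitive T f t - deltaPrimitive T f s - (t - s) • d‖ ≤ C * (t - s) := by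
  have hreal : (deltaMeasure T).real (Ico s t) = t - s := by
    rw [measureReal_def, deltaMeasure_Ico hT hs ht, ENNReal.toReal_ofReal (sub_nonneg.2 hst)]
  have hbound : ∀ᵐ x ∂(deltaMeasure T).restrict (Ico s t), ‖f x - d‖ ≤ C := by
    filter_upwards [ae_restrict_mem measurableSet_Ico,
      ae_restrict_of_ae (ae_mem_tsTk_deltaMeasure hT)] with x hx hxk using hC x ⟨hxk, hx⟩
  have hincrement : deltaPrimitive T f t - deltaPrimitive T f s - (t - s) • d
      = ∫ x in Ico s t, (f x - d) ∂deltaMeasure T := by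
    rw [deltaPrimitive, deltaPrimitive,
      intervalIntegral.integral_Iio_sub_Iio hf.integrableOn hst,
      integral_sub hf.integrableOn (integrable_const d), setIntegral_const, hreal]
  rw [hincrement, ← hreal]
  exact norm_integral_le_of_norm_le_const hbound |>.trans_eq (by simp)

lemma continuousOn_deltaPrimitive (hf : RdContinuousOn (tsTk T) f) (hT : IsCompact T) :
    ContinuousOn (deltaPrimitive T f) T := by
  obtain ⟨C, hC⟩ := hf.exists_norm_le (isCompact_tsTk hT)
  have hbound {s t : ℝ} (hs : s ∈ T) (ht : t ∈ T) (hst : s ≤ t) :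
      dist (deltaPrimitive T f t) (deltaPrimitive T f s) ≤ C * dist t s := by
    have := norm_deltaPrimitive_sub_le (d := 0) hT (hf.integrable_deltaMeasure hT) hs ht hst
      fun x hx => by simpa using hC x hx.1
    simpa [dist_eq_norm, abs_of_nonneg (sub_nonneg.2 hst)] using this
  refine (LipschitzOnWith.of_dist_le' (K := C) fun s hs t ht => ?_).continuousOn
  rcases le_total s t with hst | hts
  · rw [dist_comm, dist_comm s]
    exact hbound hs ht hst
  · exact hbound ht hs hts

lemma hasDerivWithinAt_deltaPrimitive (hT : IsCompact T) (hf : Integrable f (deltaMeasure T))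
    (ht : t ∈ T) (hcont : ContinuousWithinAt f (tsTk T) t) :
    HasDerivWithinAt (deltaPrimitive T f) (f t) T t := by
  rw [hasDerivWithinAt_iff_isLittleO, isLittleO_iff]
  intro ε hε
  have hnear := hcont.eventually (Metric.closedBall_mem_nhds (f t) hε)
  rw [eventually_nhdsWithin_iff, (nhds_basis_Ioo_pos t).eventually_iff] at hnear
  obtain ⟨δ, hδ, hclose⟩ := hnear
  filter_upwards [self_mem_nhdsWithin,
    mem_nhdsWithin_of_mem_nhds ((nhds_basis_Ioo_pos t).mem_of_mem hδ)] with s hs hsδ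
  rcases le_total s t with hst | hts
  · have := norm_deltaPrimitive_sub_le (C := ε) hT hf hs ht hst fun x hx =>
      mem_closedBall_iff_norm.1 (hclose ⟨hsδ.1.trans_le hx.2.1, by linarith [hx.2.2]⟩ hx.1)
    rw [Real.norm_eq_abs, abs_sub_comm, abs_of_nonneg (sub_nonneg.2 hst), ← norm_neg]
    refine (congrArg norm ?_).trans_le this
    module
  · rw [Real.norm_eq_abs, abs_of_nonneg (sub_nonneg.2 hts)]
    exact norm_deltaPrimitive_sub_le hT hf ht hs hts fun x hx =>
      mem_closedBall_iff_norm.1 (hclose ⟨by linarith [hx.2.1], hx.2.2.trans hsδ.2⟩ hx.1)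

lemma deltaPrimitive_tsSigma_sub (hT : IsCompact T) (hf : Integrable f (deltaMeasure T))
    (ht : t ∈ T) :
    deltaPrimitive T f (tsSigma T t) - deltaPrimitive T f t = tsMu T t • f t := by
  have hzero := norm_deltaPrimitive_sub_le (d := f t) (C := 0) hT hf ht (tsSigma_mem hT.isClosed ht)
    (le_tsSigma T t) fun x ⟨hxk, htx, hxσ⟩ => by
      obtain rfl : t = x := htx.eq_of_not_lt fun h => hxσ.not_ge (tsSigma_le hxk.1 h)
      simp
  exact sub_eq_zero.1 (norm_le_zero_iff.1 (hzero.trans_eq (zero_mul _)))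

lemma isDeltaAntideriv_deltaPrimitive (hT : IsCompact T) (hf : RdContinuousOn (tsTk T) f) :
    IsDeltaAntideriv T f (deltaPrimitive T f) := by
  intro t ht
  by_cases hσ : tsSigma T t = t
  · exact (deltaDiffAt_iff_hasDerivWithinAt hσ).2 (hasDerivWithinAt_deltaPrimitive hT
      (hf.integrable_deltaMeasure hT) ht.1 ((hf t ht).1 (tsSigma_tsTk_eq_self hT ht hσ)))
  · exact deltaDiffAt_of_continuousWithinAt hσ (continuousOn_deltaPrimitive hf hT t ht.1)
      (deltaPrimitive_tsSigma_sub hT (hf.integrable_deltaMeasure hT) ht.1)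

lemma deltaDiffAt_tsTk_deltaPrimitive (hT : IsCompact T) (hf : RdContinuousOn (tsTk T) f)
    (ht : t ∈ tsTk T) : deltaDiffAt (tsTk T) (deltaPrimitive T f) t (f t) := by
  by_cases hσ : tsSigma (tsTk T) t = t
  · exact (deltaDiffAt_iff_hasDerivWithinAt hσ).2 ((hasDerivWithinAt_deltaPrimitive hT
      (hf.integrable_deltaMeasure hT) ht.1 ((hf t ht).1 hσ)).mono (tsTk_subset T))
  · exact (isDeltaAntideriv_deltaPrimitive hT hf t ht).mono (tsTk_subset T)
      (tsSigma_tsTk_eq hT ht hσ)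

end DeltaPrimitive

section DuBoisReymond

variable {E : Type*} [NormedAddCommGroup E] {f : ℝ → E} {t : ℝ}

lemma continuousAt_integral_Ioi [NormedSpace ℝ E] {ν : Measure ℝ} (hf : Integrable f ν)
    (ht : ν {t} = 0) : ContinuousAt (fun s => ∫ x in Ioi s, f x ∂ν) t := by
  have hinterval : ContinuousAt (fun s => ∫ x in t..s, f x ∂ν) t :=
    (intervalIntegral.continuousWithinAt_primitive ht hf.intervalIntegrable).continuousAt
      (Icc_mem_nhds (sub_one_lt t) (lt_add_one t))
  have htail (s : ℝ) : ∫ x in Ioi s, f x ∂ν = ∫ x in Ioi t, f x ∂ν - ∫ x in t..s, f x ∂ν := by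
    rw [← intervalIntegral.integral_Ioi_sub_Ioi' hf.integrableOn hf.integrableOn, sub_sub_cancel]
  rw [funext htail]
  exact hinterval.const_sub _

lemma frequently_nhds_of_mem_support {X : Type*} [TopologicalSpace X] [MeasurableSpace X]
    {ν : Measure X} {p : X → Prop} {x : X} (hx : x ∈ ν.support) (hp : ∀ᵐ y ∂ν, p y) :
    ∃ᶠ y in 𝓝 x, p y := fun hU =>
  ((Measure.mem_support_iff_forall x).1 hx _ hU).ne' (by simpa [ae_iff] using hp)

lemma eq_of_ae_eq_const_of_mem_support {X Y : Type*} [TopologicalSpace X] [MeasurableSpace X]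
    [TopologicalSpace Y] [T2Space Y] {ν : Measure X} {f : X → Y} {S : Set X} {x : X} {c : Y}
    (hf : ContinuousWithinAt f S x) (hS : ∀ᵐ y ∂ν, y ∈ S) (hc : ∀ᵐ y ∂ν, f y = c)
    (hx : x ∈ ν.support) : f x = c :=
  tendsto_nhds_unique_of_frequently_eq hf tendsto_const_nhds <| frequently_nhdsWithin_iff.2 <|
    frequently_nhds_of_mem_support hx (hc.and hS)

lemma integrable_setIntegral_Ioi [NormedSpace ℝ E] {ν : Measure ℝ} [IsFiniteMeasure ν]
    (hf : Integrable f ν) : Integrable (fun s => ∫ x in Ioi s, f x ∂ν) ν := by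
  have hint :
      Integrable (fun z : ℝ × ℝ => {z | z.1 < z.2}.indicator (fun z => f z.2) z) (ν.prod ν) :=
    (hf.comp_snd ν).indicator (measurableSet_lt measurable_fst measurable_snd)
  refine hint.integral_prod_left.congr (.of_forall fun s => ?_)
  exact integral_indicator measurableSet_Ioi

variable [InnerProductSpace ℝ E] [CompleteSpace E]

lemma ae_eq_average_of_integral_inner_eq_zero {V : Type*} [NormedAddCommGroup V] [NormedSpace ℝ V]
    [FiniteDimensional ℝ V] [MeasurableSpace V] [BorelSpace V] {ν : Measure V} [IsFiniteMeasure ν]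
    {f : V → E} (hf : Integrable f ν)
    (horth : ∀ φ : V →ᵇ E, ∫ x, φ x ∂ν = 0 → ∫ x, ⟪f x, φ x⟫_ℝ ∂ν = 0) :
    ∀ᵐ x ∂ν, f x = ⨍ y, f y ∂ν := by
  have hfm : Integrable (fun x => f x - ⨍ y, f y ∂ν) ν := hf.sub (integrable_const _)
  refine (ae_eq_zero_of_integral_contDiff_smul_eq_zero hfm.locallyIntegrable
    fun g hg hgc => ext_inner_left ℝ fun e => ?_).mono fun x hx => sub_eq_zero.1 hx
  obtain ⟨C, hC⟩ := hgc.exists_bound_of_continuous hg.continuous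
  have hg_int : Integrable g ν := .of_bound hg.continuous.aestronglyMeasurable C (.of_forall hC)
  set m := ⨍ y, f y ∂ν
  set r := ⨍ y, g y ∂ν
  have hbound (x : V) : ‖g x - r‖ ≤ C + ‖r‖ := norm_sub_le_of_le (hC x) le_rfl
  let φ : V →ᵇ E := .ofNormedAddCommGroup (fun x => (g x - r) • e) (by fun_prop)
    ((C + ‖r‖) * ‖e‖) fun x => by
      rw [norm_smul]
      gcongr
      exact hbound x
  have hφ : ∫ x, φ x ∂ν = 0 := by
    simp [φ, integral_smul_const, r, integral_sub_average]
  have hgf : Integrable (fun x => (g x - r) • f x) ν :=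
    hf.bdd_smul (C + ‖r‖) (by fun_prop) (.of_forall hbound)
  have hcenter : ∫ x, g x • (f x - m) ∂ν = ∫ x, (g x - r) • f x ∂ν := by
    have hsplit (x : V) :
        g x • (f x - m) = (g x - r) • f x - (g x - r) • m + r • (f x - m) := by
      module
    simp only [hsplit]
    rw [integral_add, integral_sub hgf, integral_smul_const, integral_smul,
      integral_sub_average, integral_sub_average, zero_smul, smul_zero, sub_zero, add_zero]
    all_goals fun_prop
  rw [hcenter, ← integral_inner hgf, inner_zero_right, ← horth φ hφ]
  simp [φ, inner_smul_right, real_inner_comm]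

lemma integral_inner_setIntegral_Iio {ν : Measure ℝ} [IsFiniteMeasure ν] {P φ : ℝ → E}
    (hP : Integrable P ν) (hφ : Integrable φ ν) :
    ∫ t, ⟪P t, ∫ s in Iio t, φ s ∂ν⟫_ℝ ∂ν = ∫ s, ⟪∫ t in Ioi s, P t ∂ν, φ s⟫_ℝ ∂ν := by
  have hint : Integrable (fun z : ℝ × ℝ => ⟪P z.1, φ z.2⟫_ℝ) (ν.prod ν) :=
    hP.op_fst_snd continuous_inner ⟨1, fun x y => by simpa using norm_inner_le_norm (𝕜 := ℝ) x y⟩ hφ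
  have hswap := integral_integral_swap
    (f := fun t s => (Iio t).indicator (fun s => (⟪P t, φ s⟫_ℝ : ℝ)) s)
    (hint.indicator (measurableSet_lt measurable_snd measurable_fst))
  have hinner (t : ℝ) : ∫ s, (Iio t).indicator (fun s => (⟪P t, φ s⟫_ℝ : ℝ)) s ∂ν
      = ⟪P t, ∫ s in Iio t, φ s ∂ν⟫_ℝ := by
    rw [integral_indicator measurableSet_Iio, integral_inner hφ.integrableOn]
  have houter (s : ℝ) : ∫ t, (Iio t).indicator (fun s => (⟪P t, φ s⟫_ℝ : ℝ)) s ∂ν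
      = ⟪∫ t in Ioi s, P t ∂ν, φ s⟫_ℝ := by
    rw [real_inner_comm, ← integral_inner hP.integrableOn, ← integral_indicator measurableSet_Ioi]
    simp [indicator, real_inner_comm]
  simpa only [hinner, houter] using hswap

end DuBoisReymond

section DeltaDuBoisReymond

variable {E : Type*} [NormedAddCommGroup E] [InnerProductSpace ℝ E] {T : Set ℝ} {P Q : ℝ → E}
  {t : ℝ}

lemma RdContinuousOn.inner {S : Set ℝ} (hP : RdContinuousOn S P) (hQ : RdContinuousOn S Q) :
    RdContinuousOn S fun s => ⟪P s, Q s⟫_ℝ :=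
  (hP.prodMk hQ).comp_continuousOn (Φ := fun _ p => ⟪p.1, p.2⟫_ℝ) (by fun_prop)

lemma integrable_inner_boundedContinuousFunction {ν : Measure ℝ} (hP : Integrable P ν)
    (φ : ℝ →ᵇ E) : Integrable (fun s => ⟪P s, φ s⟫_ℝ) ν :=
  (hP.norm.mul_const ‖φ‖).mono' (hP.1.inner φ.continuous.aestronglyMeasurable) <| .of_forall
    fun s => (norm_inner_le_norm _ _).trans (by gcongr; exact φ.norm_coe_le_norm s)

lemma eq_of_ae_eq_const_deltaMeasure (hT : IsCompact T) (hnt : T.Nontrivial)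
    (hP : Integrable P (deltaMeasure T)) (hQ : RdContinuousOn (tsTk T) Q) {c : E}
    (hc : ∀ᵐ s ∂deltaMeasure T, (∫ x in Ioi s, P x ∂deltaMeasure T) + Q s = c)
    (ht : t ∈ tsTk T) : (∫ x in Ioi t, P x ∂deltaMeasure T) + Q t = c := by
  by_cases hσ : tsSigma T t = t
  · have hnull : deltaMeasure T {t} = 0 := by
      rw [deltaMeasure_singleton hT ht.1, tsMu, hσ, sub_self, ENNReal.ofReal_zero]
    have hcont :
        ContinuousWithinAt (fun s => (∫ x in Ioi s, P x ∂deltaMeasure T) + Q s) (tsTk T) t :=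
      (continuousAt_integral_Ioi hP hnull).continuousWithinAt.add
        ((hQ t ht).1 (tsSigma_tsTk_eq_self hT ht hσ))
    have heq := eq_of_ae_eq_const_of_mem_support hcont (ae_mem_tsTk_deltaMeasure hT) hc
      (tsTk_subset_support_deltaMeasure hT hnt ht)
    exact heq
  · have hatom : deltaMeasure T {t} ≠ 0 := by
      simpa [deltaMeasure_singleton hT ht.1, tsMu] using lt_tsSigma hσ
    by_contra hne
    exact hatom (measure_mono_null (singleton_subset_iff.2 hne) hc)

variable [CompleteSpace E]

lemma integral_deltaMeasure_eq (hT : IsCompact T) (hP : Integrable P (deltaMeasure T))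
    (ht : t ∈ T) : ∫ s, P s ∂deltaMeasure T
      = deltaPrimitive T P t + tsMu T t • P t + ∫ s in Ioi t, P s ∂deltaMeasure T := by
  have hμ_nonneg : 0 ≤ tsMu T t := sub_nonneg.2 (le_tsSigma T t)
  have hμ : (deltaMeasure T).real {t} = tsMu T t := by
    rw [measureReal_def, deltaMeasure_singleton hT ht, ENNReal.toReal_ofReal hμ_nonneg]
  rw [← integral_add_compl measurableSet_Iic hP, compl_Iic, ← Iio_union_right,
    setIntegral_union (by simp) (measurableSet_singleton t) hP.integrableOn hP.integrableOn,
    integral_singleton, hμ, deltaPrimitive]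

lemma exists_sub_tsMu_smul_eq_const_add_deltaPrimitive (hT : IsCompact T) (hnt : T.Nontrivial)
    (hP : RdContinuousOn (tsTk T) P) (hQ : RdContinuousOn (tsTk T) Q)
    (horth : ∀ φ : ℝ →ᵇ E, ∫ t, φ t ∂deltaMeasure T = 0 →
      ∫ t, (⟪P t, deltaPrimitive T φ t⟫_ℝ + ⟪Q t, φ t⟫_ℝ) ∂deltaMeasure T = 0) :
    ∃ c, ∀ t ∈ tsTk T, Q t - tsMu T t • P t = c + deltaPrimitive T P t := by
  have hP_int := hP.integrable_deltaMeasure hT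
  have hQ_int := hQ.integrable_deltaMeasure hT
  have htail_int := integrable_setIntegral_Ioi hP_int
  obtain ⟨c, hconst⟩ :
      ∃ c, ∀ᵐ t ∂deltaMeasure T, (∫ x in Ioi t, P x ∂deltaMeasure T) + Q t = c := by
    refine ⟨_, ae_eq_average_of_integral_inner_eq_zero (htail_int.add hQ_int) fun φ hφ => ?_⟩
    have hφ_rd : RdContinuousOn (tsTk T) φ := rdContinuousOn_of_continuousOn (by fun_prop)
    have hprim : RdContinuousOn (tsTk T) (deltaPrimitive T φ) :=
      rdContinuousOn_of_continuousOn ((continuousOn_deltaPrimitive hφ_rd hT).mono (tsTk_subset T))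
    have hFubini : ∫ s, ⟪∫ x in Ioi s, P x ∂deltaMeasure T, φ s⟫_ℝ ∂deltaMeasure T
        = ∫ t, ⟪P t, deltaPrimitive T φ t⟫_ℝ ∂deltaMeasure T :=
      (integral_inner_setIntegral_Iio hP_int (hφ_rd.integrable_deltaMeasure hT)).symm
    have hQφ := integrable_inner_boundedContinuousFunction hQ_int φ
    simp only [inner_add_left]
    rw [integral_add (integrable_inner_boundedContinuousFunction htail_int φ) hQφ, hFubini,
      ← integral_add ((hP.inner hprim).integrable_deltaMeasure hT) hQφ]
    exact horth φ hφ
  refine ⟨c - ∫ s, P s ∂deltaMeasure T, fun t ht => ?_⟩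
  rw [← eq_of_ae_eq_const_deltaMeasure hT hnt hP_int hQ hconst ht,
    integral_deltaMeasure_eq hT hP_int ht.1]
  abel

end DeltaDuBoisReymond

section FirstVariation

variable {X F : Type*} [NormedAddCommGroup X] [NormedSpace ℝ X] [NormedAddCommGroup F]
  [NormedSpace ℝ F]
variable {T : Set ℝ} {ℓ : ℝ → X → F} {ℓ' : ℝ → X → X →L[ℝ] F} {u w : ℝ → X}

lemma RdContinuousOn.add_const_smul {S : Set ℝ} (hu : RdContinuousOn S u)
    (hw : RdContinuousOn S w) (ε : ℝ) : RdContinuousOn S fun t => u t + ε • w t :=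
  (hu.prodMk hw).comp_continuousOn (Φ := fun _ p => p.1 + ε • p.2) (by fun_prop)

variable [CompleteSpace X]

lemma exists_norm_comp_add_smul_apply_le (hT : IsCompact T) (hu : RdContinuousOn T u)
    (hw : RdContinuousOn T w)
    (hℓ' : ContinuousOn (fun p : ℝ × X => ℓ' p.1 p.2) (T ×ˢ univ)) :
    ∃ C, ∀ t ∈ T, ∀ ε ∈ Icc (-1 : ℝ) 1, ‖ℓ' t (u t + ε • w t) (w t)‖ ≤ C := by
  obtain ⟨K, hK, huK⟩ := hu.exists_isCompact_mapsTo hT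
  obtain ⟨K', hK', hwK'⟩ := hw.exists_isCompact_mapsTo hT
  have hcont : ContinuousOn (fun q : ℝ × X × X × ℝ => ℓ' q.1 (q.2.1 + q.2.2.2 • q.2.2.1) q.2.2.1)
      (T ×ˢ K ×ˢ K' ×ˢ Icc (-1) 1) := by
    refine ContinuousOn.clm_apply ?_ (by fun_prop)
    exact hℓ'.comp (f := fun q : ℝ × X × X × ℝ => (q.1, q.2.1 + q.2.2.2 • q.2.2.1)) (by fun_prop)
      fun q hq => ⟨hq.1, mem_univ _⟩
  obtain ⟨C, hC⟩ :=
    (hT.prod (hK.prod (hK'.prod isCompact_Icc))).exists_bound_of_continuousOn hcont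
  exact ⟨C, fun t ht ε hε => hC (t, u t, w t, ε) ⟨ht, huK ht, hwK' ht, hε⟩⟩

lemma hasDerivAt_integral_comp_add_smul (hT : IsCompact T) (hu : RdContinuousOn (tsTk T) u)
    (hw : RdContinuousOn (tsTk T) w)
    (hℓ : ContinuousOn (fun p : ℝ × X => ℓ p.1 p.2) (tsTk T ×ˢ univ))
    (hℓ' : ContinuousOn (fun p : ℝ × X => ℓ' p.1 p.2) (tsTk T ×ˢ univ))
    (hdiff : ∀ t ∈ tsTk T, ∀ x, HasFDerivAt (ℓ t) (ℓ' t x) x) :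
    HasDerivAt (fun ε : ℝ => ∫ t, ℓ t (u t + ε • w t) ∂deltaMeasure T)
      (∫ t, ℓ' t (u t) (w t) ∂deltaMeasure T) 0 := by
  obtain ⟨C, hC⟩ := exists_norm_comp_add_smul_apply_le (isCompact_tsTk hT) hu hw hℓ'
  have hint (ε : ℝ) : Integrable (fun t => ℓ t (u t + ε • w t)) (deltaMeasure T) :=
    ((hu.add_const_smul hw ε).comp_continuousOn hℓ).integrable_deltaMeasure hT
  have hint' : Integrable (fun t => ℓ' t (u t + (0 : ℝ) • w t) (w t)) (deltaMeasure T) := by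
    have hΦ : ContinuousOn (fun p : ℝ × X × X => ℓ' p.1 p.2.1 p.2.2) (tsTk T ×ˢ univ) := by
      refine ContinuousOn.clm_apply ?_ (by fun_prop)
      exact hℓ'.comp (f := fun p : ℝ × X × X => (p.1, p.2.1)) (by fun_prop)
        fun p hp => ⟨hp.1, mem_univ _⟩
    exact (((hu.add_const_smul hw 0).prodMk hw).comp_continuousOn
      (Φ := fun t p => ℓ' t p.1 p.2) hΦ).integrable_deltaMeasure hT
  have hline (t ε : ℝ) : HasDerivAt (fun ε : ℝ => u t + ε • w t) (w t) ε := by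
    simpa using ((hasDerivAt_id ε).smul_const (w t)).const_add (u t)
  have hderiv := (hasDerivAt_integral_of_dominated_loc_of_deriv_le
    (F' := fun ε t => ℓ' t (u t + ε • w t) (w t))
    (Icc_mem_nhds (by norm_num : (-1 : ℝ) < 0) one_pos) (.of_forall fun ε => (hint ε).1)
    (hint 0) hint'.1 ((ae_mem_tsTk_deltaMeasure hT).mono hC) (integrable_const C)
    ((ae_mem_tsTk_deltaMeasure hT).mono fun t ht ε _ =>
      (hdiff t ht _).comp_hasDerivAt ε (hline t ε))).2
  simpa only [zero_smul, add_zero] using hderiv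

end FirstVariation

lemma tsSupNorm_const_smul {E : Type*} [NormedAddCommGroup E] [NormedSpace ℝ E] (S : Set ℝ)
    (f : ℝ → E) (c : ℝ) : tsSupNorm S (fun t => c • f t) = |c| * tsSupNorm S f := by
  simp only [tsSupNorm, sSup_image', norm_smul, Real.norm_eq_abs,
    Real.mul_iSup_of_nonneg (abs_nonneg c)]

namespace C1rd

variable {E : Type*} [NormedAddCommGroup E] [NormedSpace ℝ E] {T : Set ℝ} {y yd z zd : ℝ → E}

lemma rdContinuousOn (hy : C1rd T y yd) : RdContinuousOn (tsTk T) y :=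
  rdContinuousOn_of_continuousOn fun t ht =>
    ((hy.1 t ht).continuousWithinAt ht.1).mono (tsTk_subset T)

lemma add_const_smul (hy : C1rd T y yd) (hz : C1rd T z zd) (c : ℝ) :
    C1rd T (fun t => y t + c • z t) (fun t => yd t + c • zd t) :=
  ⟨fun t ht => (hy.1 t ht).add_const_smul (hz.1 t ht) c, hy.2.add_const_smul hz.2 c⟩

lemma rdContinuousOn_comp {F : Type*} [NormedAddCommGroup F] {Φ : ℝ → E → E → F}
    (hy : C1rd T y yd)
    (hΦ : ContinuousOn (fun p : ℝ × E × E => Φ p.1 p.2.1 p.2.2) (tsTk T ×ˢ univ)) :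
    RdContinuousOn (tsTk T) fun t => Φ t (y t) (yd t) :=
  (hy.rdContinuousOn.prodMk hy.2).comp_continuousOn (Φ := fun t p => Φ t p.1 p.2) hΦ

end C1rd

/-- `ys` minimizes `∫_a^b L(t, y, y^Δ) Δt`, in a ball of the norm `‖·‖_{1,∞}` around itself, among
the functions in `C¹_rd(T)` with the same endpoint values; `ysd` is the delta derivative of `ys`.
The two delta integrals are increments of arbitrary delta antiderivatives `F` and `G`. -/
def IsWeakLocalMinimizer {E : Type*} [NormedAddCommGroup E] [NormedSpace ℝ E] (T : Set ℝ) (a b : ℝ)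
    (L : ℝ → E → E → ℝ) (ys ysd : ℝ → E) : Prop :=
  ∃ δ > 0, ∀ y yd : ℝ → E, C1rd T y yd → y a = ys a → y b = ys b →
    tsSupNorm (tsTk T) (fun t => y t - ys t) + tsSupNorm (tsTk T) (fun t => yd t - ysd t) < δ →
    ∀ F G : ℝ → ℝ, IsDeltaAntideriv T (fun t => L t (ys t) (ysd t)) F →
      IsDeltaAntideriv T (fun t => L t (y t) (yd t)) G → F b - F a ≤ G b - G a

section EulerLagrange

variable {E : Type*} [NormedAddCommGroup E] [InnerProductSpace ℝ E] {T : Set ℝ}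
  {L : ℝ → E → E → ℝ} {Ly Lv : ℝ → E → E → E} {ys ysd h hd : ℝ → E}

lemma IsWeakLocalMinimizer.isLocalMin_integral
    (hmin : IsWeakLocalMinimizer T (sInf T) (sSup T) L ys ysd) (hT : IsCompact T)
    (hL : ContinuousOn (fun p : ℝ × E × E => L p.1 p.2.1 p.2.2) (tsTk T ×ˢ univ))
    (hys : C1rd T ys ysd) (hh : C1rd T h hd) (ha : h (sInf T) = 0) (hb : h (sSup T) = 0) :
    IsLocalMin (fun ε : ℝ => ∫ t, L t (ys t + ε • h t) (ysd t + ε • hd t) ∂deltaMeasure T) 0 := by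
  obtain ⟨δ, hδ, hle⟩ := hmin
  have hsmall : ∀ᶠ ε : ℝ in 𝓝 0,
      |ε| * tsSupNorm (tsTk T) h + |ε| * tsSupNorm (tsTk T) hd < δ :=
    (by fun_prop : Continuous fun ε : ℝ =>
      |ε| * tsSupNorm (tsTk T) h + |ε| * tsSupNorm (tsTk T) hd).continuousAt.eventually_lt
      continuousAt_const (by simpa using hδ)
  filter_upwards [hsmall] with ε hε
  have hvar := hys.add_const_smul hh ε
  have hcompare := hle _ _ hvar (by simp [ha]) (by simp [hb])
    (by simpa only [add_sub_cancel_left, tsSupNorm_const_smul] using hε) _ _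
    (isDeltaAntideriv_deltaPrimitive hT (hys.rdContinuousOn_comp hL))
    (isDeltaAntideriv_deltaPrimitive hT (hvar.rdContinuousOn_comp hL))
  simpa only [deltaPrimitive_sInf hT, deltaPrimitive_sSup hT, sub_zero, zero_smul, add_zero]
    using hcompare

variable [CompleteSpace E]

lemma hasFDerivAt_coprod_of_hasGradientAt {ℓ : E → E → ℝ} {ℓy ℓv : E → E → E}
    (hy : ∀ y v, HasGradientAt (fun z => ℓ z v) (ℓy y v) y)
    (hv : ∀ y v, HasGradientAt (fun z => ℓ y z) (ℓv y v) v)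
    (hyc : Continuous fun p : E × E => ℓy p.1 p.2) (hvc : Continuous fun p : E × E => ℓv p.1 p.2)
    (p : E × E) :
    HasFDerivAt (fun q : E × E => ℓ q.1 q.2)
      ((innerSL ℝ (ℓy p.1 p.2)).coprod (innerSL ℝ (ℓv p.1 p.2))) p :=
  (hasStrictFDerivAt_uncurry_coprod (f₁ := fun y v => innerSL ℝ (ℓy y v))
    (f₂ := fun y v => innerSL ℝ (ℓv y v)) (.of_forall fun q => (hy q.1 q.2).hasFDerivAt)
    (.of_forall fun q => (hv q.1 q.2).hasFDerivAt)
    ((innerSL ℝ).continuous.comp hyc).continuousAt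
    ((innerSL ℝ).continuous.comp hvc).continuousAt).hasFDerivAt

variable
  (hLc : ContinuousOn (fun p : ℝ × E × E => L p.1 p.2.1 p.2.2) (tsTk T ×ˢ univ))
  (hLy : ∀ t ∈ tsTk T, ∀ y v : E, HasGradientAt (fun z => L t z v) (Ly t y v) y)
  (hLv : ∀ t ∈ tsTk T, ∀ y v : E, HasGradientAt (fun z => L t y z) (Lv t y v) v)
  (hLyc : ContinuousOn (fun p : ℝ × E × E => Ly p.1 p.2.1 p.2.2) (tsTk T ×ˢ univ))
  (hLvc : ContinuousOn (fun p : ℝ × E × E => Lv p.1 p.2.1 p.2.2) (tsTk T ×ˢ univ))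

include hLc hLy hLv hLyc hLvc

lemma hasDerivAt_integral_lagrangian (hT : IsCompact T) (hys : C1rd T ys ysd)
    (hh : C1rd T h hd) :
    HasDerivAt (fun ε : ℝ => ∫ t, L t (ys t + ε • h t) (ysd t + ε • hd t) ∂deltaMeasure T)
      (∫ t, (⟪Ly t (ys t) (ysd t), h t⟫_ℝ + ⟪Lv t (ys t) (ysd t), hd t⟫_ℝ) ∂deltaMeasure T) 0 := by
  have hslice {f : ℝ → E → E → E} (hf : ContinuousOn (fun p : ℝ × E × E => f p.1 p.2.1 p.2.2)
      (tsTk T ×ˢ univ)) {t : ℝ} (ht : t ∈ tsTk T) : Continuous fun p : E × E => f t p.1 p.2 :=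
    hf.comp_continuous (f := fun p : E × E => (t, p)) (by fun_prop) fun p => ⟨ht, mem_univ p⟩
  exact hasDerivAt_integral_comp_add_smul (ℓ := fun t p => L t p.1 p.2)
    (ℓ' := fun t p => (innerSL ℝ (Ly t p.1 p.2)).coprod (innerSL ℝ (Lv t p.1 p.2)))
    (u := fun t => (ys t, ysd t)) (w := fun t => (h t, hd t)) hT
    (hys.rdContinuousOn.prodMk hys.2) (hh.rdContinuousOn.prodMk hh.2) hLc
    (by fun_prop) fun t ht => hasFDerivAt_coprod_of_hasGradientAt (hLy t ht) (hLv t ht)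
      (hslice hLyc ht) (hslice hLvc ht)

lemma exists_euler_lagrange_integral_form
    (hmin : IsWeakLocalMinimizer T (sInf T) (sSup T) L ys ysd) (hT : IsCompact T)
    (hnt : T.Nontrivial) (hys : C1rd T ys ysd) :
    ∃ c, ∀ t ∈ tsTk T, Lv t (ys t) (ysd t) - tsMu T t • Ly t (ys t) (ysd t)
      = c + deltaPrimitive T (fun s => Ly s (ys s) (ysd s)) t := by
  refine exists_sub_tsMu_smul_eq_const_add_deltaPrimitive hT hnt (hys.rdContinuousOn_comp hLyc)
    (hys.rdContinuousOn_comp hLvc) fun φ hφ => ?_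
  have hφ_rd : RdContinuousOn (tsTk T) φ := rdContinuousOn_of_continuousOn (by fun_prop)
  have hΦ : C1rd T (deltaPrimitive T φ) φ := ⟨isDeltaAntideriv_deltaPrimitive hT hφ_rd, hφ_rd⟩
  exact (hmin.isLocalMin_integral hT hLc hys hΦ (deltaPrimitive_sInf hT φ)
    ((deltaPrimitive_sSup hT φ).trans hφ)).hasDerivAt_eq_zero
    (hasDerivAt_integral_lagrangian hLc hLy hLv hLyc hLvc hT hys hΦ)

end EulerLagrange

theorem euler_lagrange_delta_differentiated_form_general {E : Type*} [NormedAddCommGroup E]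
    [InnerProductSpace ℝ E] [CompleteSpace E] {T : Set ℝ} (hT : IsCompact T) {a b : ℝ}
    (ha : IsLeast T a) (hb : IsGreatest T b) (hab : a < b)
    {L : ℝ → E → E → ℝ} {Ly Lv : ℝ → E → E → E}
    (hLc : ContinuousOn (fun p : ℝ × E × E => L p.1 p.2.1 p.2.2) (tsTk T ×ˢ univ))
    (hLy : ∀ t ∈ tsTk T, ∀ y v : E, HasGradientAt (fun z => L t z v) (Ly t y v) y)
    (hLv : ∀ t ∈ tsTk T, ∀ y v : E, HasGradientAt (fun z => L t y z) (Lv t y v) v)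
    (hLyc : ContinuousOn (fun p : ℝ × E × E => Ly p.1 p.2.1 p.2.2) (tsTk T ×ˢ univ))
    (hLvc : ContinuousOn (fun p : ℝ × E × E => Lv p.1 p.2.1 p.2.2) (tsTk T ×ˢ univ))
    {ys ysd : ℝ → E} (hys : C1rd T ys ysd) (hmin : IsWeakLocalMinimizer T a b L ys ysd) :
    ∀ t ∈ tsTk (tsTk T), deltaDiffAt (tsTk T)
      (fun s => Lv s (ys s) (ysd s) - tsMu T s • Ly s (ys s) (ysd s)) t (Ly t (ys t) (ysd t)) := by
  intro t ht
  rw [← ha.csInf_eq, ← hb.csSup_eq] at hmin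
  obtain ⟨c, hc⟩ := exists_euler_lagrange_integral_form hLc hLy hLv hLyc hLvc hmin hT
    ⟨a, ha.1, b, hb.1, hab.ne⟩ hys
  exact ((deltaDiffAt_tsTk_deltaPrimitive hT (hys.rdContinuousOn_comp hLyc)
    (tsTk_subset _ ht)).const_add c).congr (isCompact_tsTk hT).isClosed (tsTk_subset _ ht) hc

theorem euler_lagrange_delta_differentiated_form
    {n : ℕ} (hn : 1 ≤ n)
    (T₀ : Set ℝ) (hT₀closed : IsClosed T₀)
    (a b : ℝ) (ha : a ∈ T₀) (hb : b ∈ T₀) (hab : a < b)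
    (T : Set ℝ) (hT : T = Icc a b ∩ T₀)
    (hT3 : ∃ c ∈ T, c ≠ a ∧ c ≠ b)
    (L : ℝ → En n → En n → ℝ) (Ly Lv : ℝ → En n → En n → En n)
    (hLc : ContinuousOn (fun p : ℝ × En n × En n => L p.1 p.2.1 p.2.2)
      (T ×ˢ (univ : Set (En n × En n))))
    (hLC2 : ∀ t ∈ T, ContDiff ℝ 2 (fun p : En n × En n => L t p.1 p.2))
    (hLy : ∀ t ∈ T, ∀ y v : En n, HasGradientAt (fun z => L t z v) (Ly t y v) y)
    (hLv : ∀ t ∈ T, ∀ y v : En n, HasGradientAt (fun z => L t y z) (Lv t y v) v)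
    (hLyc : ContinuousOn (fun p : ℝ × En n × En n => Ly p.1 p.2.1 p.2.2)
      (T ×ˢ (univ : Set (En n × En n))))
    (hLvc : ContinuousOn (fun p : ℝ × En n × En n => Lv p.1 p.2.1 p.2.2)
      (T ×ˢ (univ : Set (En n × En n))))
    (ys yds : ℝ → En n) (hys : C1rd T ys yds)
    (hmin : ∃ δ > 0, ∀ y yd : ℝ → En n, C1rd T y yd →
      y a = ys a → y b = ys b →
      tsSupNorm (tsTk T) (fun t => y t - ys t)
        + tsSupNorm (tsTk T) (fun t => yd t - yds t) < δ →
      ∀ F G : ℝ → ℝ,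
        IsDeltaAntideriv T (fun t => L t (ys t) (yds t)) F →
        IsDeltaAntideriv T (fun t => L t (y t) (yd t)) G →
        F b - F a ≤ G b - G a) :
    ∀ t ∈ tsTk (tsTk T), deltaDiffAt (tsTk T)
      (fun s => Lv s (ys s) (yds s) - tsMu T s • Ly s (ys s) (yds s)) t
      (Ly t (ys t) (yds t)) := by
  subst hT
  exact euler_lagrange_delta_differentiated_form_general (isCompact_Icc.inter_right hT₀closed)
    ⟨⟨left_mem_Icc.2 hab.le, ha⟩, fun _ hx => hx.1.1⟩
    ⟨⟨right_mem_Icc.2 hab.le, hb⟩, fun _ hx => hx.1.2⟩ hab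
    (hLc.mono (prod_mono_left (tsTk_subset _))) (fun t ht => hLy t ht.1) (fun t ht => hLv t ht.1)
    (hLyc.mono (prod_mono_left (tsTk_subset _))) (hLvc.mono (prod_mono_left (tsTk_subset _)))
    hys hmin
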